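/- arXiv:1909.01906 — 2 statements merged into one kernel-verified Lean document; each statement's English description precedes it below -/
import Mathlib

section
/- Let N ⊆ M_m be a unital *-subalgebra, let ρ ∈ M_m be a density and let e be the support projection of ρ. Then for every density σ ∈ N one has ‖σ^{1/2} ρ^{1/2}‖_1 ≤ ‖E(e)‖_∞^{1/2}; consequently D_{1/2}(ρ‖N) ≥ −log ‖E(e)‖_∞. -/
open scoped ENNReal Classical ComplexOrder
open Matrix

noncomputable section

namespace GJL

variable {n : Type*} [Fintype n] [DecidableEq n]

/-- `Mat n` is the matrix *-algebra with rows and columns indexed by `n`. -/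
abbrev Mat (n : Type*) [Fintype n] [DecidableEq n] := Matrix n n ℂ

/-- A density matrix: positive semidefinite with trace one. -/
def IsDensity (ρ : Mat n) : Prop := ρ.PosSemidef ∧ ρ.trace = 1

/-- The real part of the (matrix) trace. -/
def traceR (A : Mat n) : ℝ := (A.trace).re

/-- Real matrix powers via the continuous functional calculus.  For positive
semidefinite matrices and negative exponents this is the generalized inverse
power on the support, since `(0 : ℝ) ^ r = 0` for `r ≠ 0`. -/
def mpow (A : Mat n) (r : ℝ) : Mat n := cfc (fun x : ℝ => x ^ r) A

/-- Matrix logarithm on the support (`Real.log 0 = 0`). -/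
def mlog (A : Mat n) : Mat n := cfc Real.log A

/-- Schatten `p`-norm `(Tr ((x* x)^(p/2)))^(1/p)`. -/
def snorm (p : ℝ) (x : Mat n) : ℝ := (traceR (mpow (xᴴ * x) (p/2))) ^ (1/p)

/-- Operator norm `‖x‖_∞`. -/
def opNorm (x : Mat n) : ℝ := ‖(Matrix.toEuclideanCLM (𝕜 := ℂ) x : EuclideanSpace ℂ n →L[ℂ] EuclideanSpace ℂ n)‖

/-- The support projection of `ρ` is dominated by that of `σ` (for positive
semidefinite matrices: `ker σ ⊆ ker ρ`). -/
def suppLe (ρ σ : Mat n) : Prop := ∀ v, σ.mulVec v = 0 → ρ.mulVec v = 0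

/-- `e` is the support projection of `ρ`. -/
def IsSupportProj (ρ e : Mat n) : Prop :=
  e.IsHermitian ∧ e * e = e ∧ ∀ v, e.mulVec v = 0 ↔ ρ.mulVec v = 0

/-- `D_∞(ρ‖σ) = log min {λ ≥ 0 | ρ ≤ λ σ}`, `⊤` if no such `λ` exists. -/
def Dinf (ρ σ : Mat n) : EReal :=
  if ∃ c : ℝ, 0 ≤ c ∧ (c • σ - ρ).PosSemidef then
    ((Real.log (sInf {c : ℝ | 0 ≤ c ∧ (c • σ - ρ).PosSemidef}) : ℝ) : EReal)
  else ⊤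

/-- Umegaki relative entropy `D(ρ‖σ) = Tr(ρ log ρ - ρ log σ)`, `⊤` if the
support condition fails. -/
def DU (ρ σ : Mat n) : EReal :=
  if suppLe ρ σ then ((traceR (ρ * mlog ρ - ρ * mlog σ) : ℝ) : EReal) else ⊤

/-- The sandwiched matrix `σ^{(1-p)/(2p)} ρ σ^{(1-p)/(2p)}`; note that for
`p > 1` the exponent `(1-p)/(2p)` equals `-1/(2p')` with `1/p + 1/p' = 1`. -/
def sandwich (p : ℝ) (ρ σ : Mat n) : Mat n :=
  mpow σ ((1 - p)/(2*p)) * ρ * mpow σ ((1 - p)/(2*p))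

/-- The sandwiched Rényi relative entropy `D_p(ρ‖σ)` for `p ∈ [1/2, ∞]`:
for `p ∈ (1,∞)` it is `p' log ‖σ^{-1/(2p')} ρ σ^{-1/(2p')}‖_p
= (p-1)⁻¹ log Tr ((σ^{-1/(2p')} ρ σ^{-1/(2p')})^p)` when the support of `ρ` is
dominated by that of `σ` and `⊤` otherwise; for `p ∈ [1/2, 1)` it is
`(p-1)⁻¹ log Tr ((σ^{(1-p)/(2p)} ρ σ^{(1-p)/(2p)})^p)` (`⊤` when the trace
vanishes, i.e. when the honest value is `+∞`); `D_1` is the Umegaki relative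
entropy and `D_∞` the max-relative entropy. -/
def Dp (p : ℝ≥0∞) (ρ σ : Mat n) : EReal :=
  if p = ⊤ then Dinf ρ σ
  else if p = 1 then DU ρ σ
  else if 1 < p.toReal ∧ ¬ suppLe ρ σ then ⊤
  else if traceR (mpow (sandwich p.toReal ρ σ) p.toReal) = 0 then ⊤
  else (((p.toReal - 1)⁻¹ * Real.log (traceR (mpow (sandwich p.toReal ρ σ) p.toReal)) : ℝ) : EReal)

/-- `D_p(ρ‖S) = inf { D_p(ρ‖σ) | σ a density in S }`. -/
def DpSet (p : ℝ≥0∞) (ρ : Mat n) (S : Set (Mat n)) : EReal :=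
  ⨅ σ ∈ {σ ∈ S | IsDensity σ}, Dp p ρ σ

/-- `D_p(A‖S) = sup { D_p(ρ‖S) | ρ a density in A }`. -/
def DpRel (p : ℝ≥0∞) (A S : Set (Mat n)) : EReal :=
  ⨆ ρ ∈ {ρ ∈ A | IsDensity ρ}, DpSet p ρ S

open scoped Kronecker in
/-- The algebraic tensor product `N₁ ⊗ N₂ ⊆ M_{n₁} ⊗ M_{n₂} = M_{n₁ × n₂}`,
realized as the linear span of Kronecker products. -/
def tensorSpan {n₁ n₂ : Type*} [Fintype n₁] [DecidableEq n₁] [Fintype n₂] [DecidableEq n₂]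
    (N₁ : Set (Mat n₁)) (N₂ : Set (Mat n₂)) : Set (Mat (n₁ × n₂)) :=
  ↑(Submodule.span ℂ {z : Mat (n₁ × n₂) | ∃ x ∈ N₁, ∃ y ∈ N₂, z = x ⊗ₖ y})

/-- `D_{p,cb}(M‖N) = sup_k D_p(M_k ⊗ M ‖ M_k ⊗ N)`. -/
def DpCb (p : ℝ≥0∞) (N : Set (Mat n)) : EReal :=
  ⨆ k : ℕ, DpRel p Set.univ (tensorSpan (Set.univ : Set (Mat (Fin k))) N)

/-- `E` is the trace preserving conditional expectation onto `N`, i.e. the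
orthogonal projection onto `N` with respect to the Hilbert–Schmidt inner
product `⟨x,y⟩ = Tr(x* y)`. -/
def IsCondExp (N : Set (Mat n)) (E : Mat n →ₗ[ℂ] Mat n) : Prop :=
  (∀ x, E x ∈ N) ∧ (∀ x ∈ N, E x = x) ∧
    ∀ x y, y ∈ N → ((E x)ᴴ * y).trace = (xᴴ * y).trace

/-- The Pimsner–Popa index constant
`λ(M:N) = max {c ≥ 0 | c x ≤ E(x) for all x ≥ 0}`. -/
def ppIndex (E : Mat n →ₗ[ℂ] Mat n) : ℝ :=
  sSup {c : ℝ | 0 ≤ c ∧ ∀ x : Mat n, x.PosSemidef → (E x - c • x).PosSemidef}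

/-- von Neumann entropy `H(ρ) = -Tr(ρ log ρ)`. -/
def vnEntropy (ρ : Mat n) : ℝ := - traceR (ρ * mlog ρ)

/-- The amplification `id_{M_k} ⊗ Φ` acting on `M_k ⊗ M_n = M_{k × n}`,
applying `Φ` blockwise. -/
def ampFun (k : Type*) [Fintype k] [DecidableEq k] (Φ : Mat n →ₗ[ℂ] Mat n)
    (X : Mat (k × n)) : Mat (k × n) :=
  Matrix.of fun a b => Φ (Matrix.of fun s t => X (a.1, s) (b.1, t)) a.2 b.2

/-- Complete positivity: all amplifications `id_{M_k} ⊗ Φ` preserve positive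
semidefiniteness. -/
def IsCP (Φ : Mat n →ₗ[ℂ] Mat n) : Prop :=
  ∀ (k : ℕ) (X : Mat (Fin k × n)), X.PosSemidef → (ampFun (Fin k) Φ X).PosSemidef

/-- Completely positive and trace preserving. -/
def IsCPTP (Φ : Mat n →ₗ[ℂ] Mat n) : Prop :=
  IsCP Φ ∧ ∀ x : Mat n, (Φ x).trace = x.trace

/-!
Since `e ρ^{1/2} = ρ^{1/2}`, Hölder's inequality gives
`‖σ^{1/2} ρ^{1/2}‖₁ ≤ ‖σ^{1/2} e‖₂ ‖ρ^{1/2}‖₂ = Tr(e σ)^{1/2}`, and for `σ ∈ N` one has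
`Tr(e σ) = Tr(E(e)* σ) ≤ ‖E(e)‖_∞`. Hölder's inequality itself is the Cauchy–Schwarz inequality for
the Hilbert–Schmidt inner product, after writing `|x| = v x` with a contraction `v`.
For the divergence, `σ^{1/2} ρ σ^{1/2} = x x*` with `x = σ^{1/2} ρ^{1/2}` has the same eigenvalues
as `x* x`, so that `D_{1/2}(ρ‖σ) = -2 log ‖x‖₁`.
-/

section Trace

lemma traceR_mul_comm (A B : Mat n) : traceR (A * B) = traceR (B * A) := by
  rw [traceR, trace_mul_comm, traceR]

lemma traceR_nonneg {A : Mat n} (hA : A.PosSemidef) : 0 ≤ traceR A :=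
  (Complex.le_def.1 hA.trace_nonneg).1

open scoped MatrixOrder in
lemma traceR_mono {A B : Mat n} (h : A ≤ B) : traceR A ≤ traceR B :=
  (Complex.le_def.1 (OrderHomClass.mono (tracePositiveLinearMap n ℂ ℂ) h)).1

lemma trace_cfc {A : Mat n} (hA : A.IsHermitian) (f : ℝ → ℝ) :
    (cfc f A).trace = ∑ i, (f (hA.eigenvalues i) : ℂ) := by
  rw [hA.cfc_eq, IsHermitian.cfc, Unitary.conjStarAlgAut_apply, trace_mul_comm, ← mul_assoc]
  simp [trace_diagonal]

lemma trace_cfc_eq_of_charpoly_eq {A B : Mat n} (hA : A.IsHermitian) (hB : B.IsHermitian)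
    (h : A.charpoly = B.charpoly) (f : ℝ → ℝ) : (cfc f A).trace = (cfc f B).trace := by
  rw [trace_cfc hA, trace_cfc hB, (hA.eigenvalues_eq_eigenvalues_iff hB).2 h]

end Trace

section Powers

variable {A : Mat n}

lemma isHermitian_mpow (A : Mat n) (r : ℝ) : (mpow A r).IsHermitian :=
  cfc_predicate (R := ℝ) _ A

lemma mpow_one (hA : A.IsHermitian) : mpow A 1 = A := by
  simpa only [mpow, Real.rpow_one] using cfc_id' ℝ A hA.isSelfAdjoint

lemma mpow_mul_mpow_eq_cfc (A : Mat n) (r s : ℝ) :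
    mpow A r * mpow A s = cfc (fun x : ℝ => x ^ r * x ^ s) A :=
  (cfc_mul _ _ A (finite_real_spectrum.continuousOn _) (finite_real_spectrum.continuousOn _)).symm

open scoped MatrixOrder in
lemma nonneg_of_mem_spectrum (hA : A.PosSemidef) {x : ℝ} (hx : x ∈ spectrum ℝ A) : 0 ≤ x :=
  spectrum_nonneg_of_nonneg hA.nonneg hx

open scoped MatrixOrder in
lemma posSemidef_mpow (hA : A.PosSemidef) (r : ℝ) : (mpow A r).PosSemidef :=
  nonneg_iff_posSemidef.1 <|
    cfc_nonneg fun _ hx => Real.rpow_nonneg (nonneg_of_mem_spectrum hA hx) r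

-- For `r = -s ≠ 0` the left-hand side is the support projection of `A`, while `mpow A 0 = 1`.
lemma mpow_mul_mpow (hA : A.PosSemidef) {r s : ℝ} (hrs : r + s ≠ 0) :
    mpow A r * mpow A s = mpow A (r + s) := by
  rw [mpow_mul_mpow_eq_cfc]
  exact cfc_congr fun x hx => (Real.rpow_add' (nonneg_of_mem_spectrum hA hx) hrs).symm

lemma mpow_half_mul_self (hA : A.PosSemidef) : mpow A (1/2) * mpow A (1/2) = A := by
  rw [mpow_mul_mpow hA (by norm_num), add_halves, mpow_one hA.isHermitian]

open scoped Matrix.Norms.L2Operator in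
lemma opNorm_mpow_mul_mpow_neg_le_one (hA : A.PosSemidef) (r : ℝ) :
    opNorm (mpow A r * mpow A (-r)) ≤ 1 := by
  rw [mpow_mul_mpow_eq_cfc]
  refine norm_cfc_le (A := Mat n) zero_le_one fun x hx => ?_
  have hx0 := nonneg_of_mem_spectrum hA hx
  rw [Real.rpow_neg hx0, Real.norm_of_nonneg (by positivity)]
  exact mul_inv_le_one

end Powers

section SchattenNorms

lemma snorm_nonneg (p : ℝ) (x : Mat n) : 0 ≤ snorm p x :=
  Real.rpow_nonneg (traceR_nonneg (posSemidef_mpow (posSemidef_conjTranspose_mul_self x) _)) _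

lemma snorm_one (x : Mat n) : snorm 1 x = traceR (mpow (xᴴ * x) (1/2)) := by
  rw [snorm, div_one, Real.rpow_one]

lemma snorm_two (x : Mat n) : snorm 2 x = √(traceR (xᴴ * x)) := by
  rw [snorm, div_self two_ne_zero, mpow_one (isHermitian_conjTranspose_mul_self x),
    Real.sqrt_eq_rpow]

lemma snorm_conjTranspose (p : ℝ) (x : Mat n) : snorm p xᴴ = snorm p x := by
  rw [snorm, snorm, traceR, traceR, conjTranspose_conjTranspose, mpow, mpow,
    trace_cfc_eq_of_charpoly_eq (isHermitian_mul_conjTranspose_self x)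
      (isHermitian_conjTranspose_mul_self x) (charpoly_mul_comm x xᴴ)]

lemma traceR_mul_le_snorm_two_mul_snorm_two (x y : Mat n) :
    traceR (x * y) ≤ snorm 2 x * snorm 2 y := by
  let := toMatrixSeminormedAddCommGroup (1 : Mat n) .one
  let := toMatrixInnerProductSpace (1 : Mat n) .one
  have inner_eq (a b : Mat n) : RCLike.re (inner ℂ a b) = traceR (aᴴ * b) := by
    have hdef : inner ℂ a b = (b * 1 * aᴴ).trace := rfl
    rw [hdef, mul_one, traceR_mul_comm]
    rfl
  have norm_eq (a : Mat n) : ‖a‖ = snorm 2 a := by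
    rw [norm_eq_sqrt_re_inner (𝕜 := ℂ), inner_eq, snorm_two]
  simpa only [inner_eq, norm_eq, conjTranspose_conjTranspose, snorm_conjTranspose] using
    re_inner_le_norm (𝕜 := ℂ) xᴴ y

open scoped MatrixOrder Matrix.Norms.L2Operator in
lemma snorm_two_mul_le (x y : Mat n) : snorm 2 (x * y) ≤ opNorm x * snorm 2 y := by
  have hconj : (x * y)ᴴ * (x * y) ≤ ‖x‖ ^ 2 • (yᴴ * y) := by
    have hle := star_left_conjugate_le_conjugate
      (CStarAlgebra.star_mul_le_algebraMap_norm_sq (a := x)) y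
    simpa only [star_eq_conjTranspose, conjTranspose_mul, mul_assoc, Algebra.algebraMap_eq_smul_one,
      smul_mul_assoc, mul_smul_comm, one_mul] using hle
  calc snorm 2 (x * y) = √(traceR ((x * y)ᴴ * (x * y))) := snorm_two _
    _ ≤ √(‖x‖ ^ 2 * traceR (yᴴ * y)) := by
        refine Real.sqrt_le_sqrt ((traceR_mono hconj).trans_eq ?_)
        rw [traceR, trace_smul, Complex.smul_re, smul_eq_mul, traceR]
    _ = opNorm x * snorm 2 y := by
        rw [Real.sqrt_mul (sq_nonneg _), Real.sqrt_sq (norm_nonneg _), ← snorm_two]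
        rfl

open scoped Matrix.Norms.L2Operator in
lemma exists_opNorm_le_one_mul_eq_mpow_half (x : Mat n) :
    ∃ v : Mat n, opNorm v ≤ 1 ∧ v * x = mpow (xᴴ * x) (1/2) := by
  have hx := posSemidef_conjTranspose_mul_self x
  -- `b` inverts `|x|` on its support, so `x * b` is the polar part of `x` and `v` its adjoint.
  set b := mpow (xᴴ * x) (-(1/2))
  have hb : b * (xᴴ * x) = mpow (xᴴ * x) (1/2) := by
    calc b * (xᴴ * x) = b * mpow (xᴴ * x) 1 := by rw [mpow_one hx.isHermitian]
      _ = mpow (xᴴ * x) (1/2) := by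
          rw [mpow_mul_mpow hx (by norm_num)]
          norm_num
  have hbs : bᴴ = b := isHermitian_mpow _ _
  refine ⟨b * xᴴ, ?_, by rw [mul_assoc, hb]⟩
  have hnorm : ‖b * xᴴ‖ ^ 2 ≤ 1 := by
    calc ‖b * xᴴ‖ ^ 2 = ‖(b * xᴴ) * (b * xᴴ)ᴴ‖ := by
          rw [sq, ← CStarRing.norm_self_mul_star, star_eq_conjTranspose]
      _ = ‖mpow (xᴴ * x) (1/2) * b‖ := by
          rw [conjTranspose_mul, conjTranspose_conjTranspose, hbs, ← hb]
          simp only [mul_assoc]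
      _ ≤ 1 := opNorm_mpow_mul_mpow_neg_le_one hx _
  exact (sq_le_one_iff₀ (norm_nonneg _)).1 hnorm

lemma snorm_one_mul_le (x y : Mat n) : snorm 1 (x * y) ≤ snorm 2 x * snorm 2 y := by
  obtain ⟨v, hv, hvxy⟩ := exists_opNorm_le_one_mul_eq_mpow_half (x * y)
  calc snorm 1 (x * y) = traceR ((v * x) * y) := by rw [snorm_one, ← hvxy, mul_assoc]
    _ ≤ snorm 2 (v * x) * snorm 2 y := traceR_mul_le_snorm_two_mul_snorm_two _ _
    _ ≤ (opNorm v * snorm 2 x) * snorm 2 y :=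
        mul_le_mul_of_nonneg_right (snorm_two_mul_le v x) (snorm_nonneg 2 y)
    _ ≤ snorm 2 x * snorm 2 y :=
        mul_le_mul_of_nonneg_right (mul_le_of_le_one_left (snorm_nonneg 2 x) hv)
          (snorm_nonneg 2 y)

lemma snorm_two_mpow_half {σ : Mat n} (hσ : σ.PosSemidef) :
    snorm 2 (mpow σ (1/2)) = √(traceR σ) := by
  rw [snorm_two, (isHermitian_mpow σ _).eq, mpow_half_mul_self hσ]

lemma snorm_two_mpow_half_mul {σ : Mat n} (hσ : σ.PosSemidef) (x : Mat n) :
    snorm 2 (mpow σ (1/2) * x) = √(traceR (x * xᴴ * σ)) := by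
  rw [snorm_two, conjTranspose_mul, (isHermitian_mpow σ _).eq, mul_assoc,
    ← mul_assoc (mpow σ _), mpow_half_mul_self hσ, traceR_mul_comm, mul_assoc,
    traceR_mul_comm]

lemma traceR_mul_le_opNorm_mul_traceR (x : Mat n) {σ : Mat n} (hσ : σ.PosSemidef) :
    traceR (x * σ) ≤ opNorm x * traceR σ := by
  set s := mpow σ (1/2)
  calc traceR (x * σ) = traceR ((x * s) * s) := by rw [mul_assoc, mpow_half_mul_self hσ]
    _ ≤ snorm 2 (x * s) * snorm 2 s := traceR_mul_le_snorm_two_mul_snorm_two _ _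
    _ ≤ (opNorm x * snorm 2 s) * snorm 2 s :=
        mul_le_mul_of_nonneg_right (snorm_two_mul_le x s) (snorm_nonneg 2 s)
    _ = opNorm x * traceR σ := by
        rw [mul_assoc, snorm_two_mpow_half hσ, Real.mul_self_sqrt (traceR_nonneg hσ)]

end SchattenNorms

section Support

variable {ρ σ e : Mat n}

lemma IsSupportProj.mul_eq (he : IsSupportProj ρ e) : ρ * e = ρ := by
  obtain ⟨-, hidem, hker⟩ := he
  have hzero : ρ * (1 - e) = 0 := by
    refine ext_of_mulVec_single fun i => ?_
    rw [← mulVec_mulVec, zero_mulVec, ← hker, mulVec_mulVec, mul_sub, mul_one, hidem, sub_self,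
      zero_mulVec]
  rw [mul_sub, mul_one, sub_eq_zero] at hzero
  exact hzero.symm

lemma IsSupportProj.mpow_half_mul_eq (he : IsSupportProj ρ e) (hρ : ρ.PosSemidef) :
    mpow ρ (1/2) * e = mpow ρ (1/2) := by
  have hzero : mpow ρ (1/2) * (1 - e) = 0 := by
    rw [← conjTranspose_mul_self_mul_eq_zero, (isHermitian_mpow ρ _).eq, mpow_half_mul_self hρ,
      mul_sub, mul_one, he.mul_eq, sub_self]
  rw [mul_sub, mul_one, sub_eq_zero] at hzero
  exact hzero.symm

lemma IsSupportProj.mul_mpow_half_eq (he : IsSupportProj ρ e) (hρ : ρ.PosSemidef) :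
    e * mpow ρ (1/2) = mpow ρ (1/2) := by
  simpa only [conjTranspose_mul, he.1.eq, (isHermitian_mpow ρ _).eq] using
    congrArg conjTranspose (he.mpow_half_mul_eq hρ)

lemma IsSupportProj.snorm_one_mpow_half_mul_mpow_half_le (he : IsSupportProj ρ e)
    (hρ : ρ.PosSemidef) (hσ : σ.PosSemidef) :
    snorm 1 (mpow σ (1/2) * mpow ρ (1/2)) ≤ √(traceR (e * σ)) * √(traceR ρ) := by
  calc snorm 1 (mpow σ (1/2) * mpow ρ (1/2))
      = snorm 1 ((mpow σ (1/2) * e) * mpow ρ (1/2)) := by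
        rw [mul_assoc, he.mul_mpow_half_eq hρ]
    _ ≤ snorm 2 (mpow σ (1/2) * e) * snorm 2 (mpow ρ (1/2)) := snorm_one_mul_le _ _
    _ = √(traceR (e * σ)) * √(traceR ρ) := by
        rw [snorm_two_mpow_half_mul hσ, snorm_two_mpow_half hρ, he.1.eq, he.2.1]

end Support

section Divergence

variable {S : Set (Mat n)} {E : Mat n →ₗ[ℂ] Mat n} {ρ σ e : Mat n}

open scoped Matrix.Norms.L2Operator in
lemma IsCondExp.traceR_conjTranspose_mul_le (hE : IsCondExp S E) (hσS : σ ∈ S)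
    (hσ : σ.PosSemidef) (x : Mat n) : traceR (xᴴ * σ) ≤ opNorm (E x) * traceR σ := by
  calc traceR (xᴴ * σ) = traceR ((E x)ᴴ * σ) := by rw [traceR, traceR, hE.2.2 x σ hσS]
    _ ≤ opNorm (E x)ᴴ * traceR σ := traceR_mul_le_opNorm_mul_traceR _ hσ
    _ = opNorm (E x) * traceR σ := congrArg (· * traceR σ) (l2_opNorm_conjTranspose (E x))

lemma IsCondExp.snorm_one_mpow_half_mul_mpow_half_le (hE : IsCondExp S E) (hρ : IsDensity ρ)
    (he : IsSupportProj ρ e) (hσS : σ ∈ S) (hσ : IsDensity σ) :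
    snorm 1 (mpow σ (1/2) * mpow ρ (1/2)) ≤ √(opNorm (E e)) := by
  have htr {τ : Mat n} (hτ : IsDensity τ) : traceR τ = 1 := by rw [traceR, hτ.2, Complex.one_re]
  have hop : traceR (e * σ) ≤ opNorm (E e) := by
    simpa only [he.1.eq, htr hσ, mul_one] using hE.traceR_conjTranspose_mul_le hσS hσ.1 e
  calc snorm 1 (mpow σ (1/2) * mpow ρ (1/2))
      ≤ √(traceR (e * σ)) * √(traceR ρ) := he.snorm_one_mpow_half_mul_mpow_half_le hρ.1 hσ.1
    _ = √(traceR (e * σ)) := by rw [htr hρ, Real.sqrt_one, mul_one]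
    _ ≤ √(opNorm (E e)) := Real.sqrt_le_sqrt hop

lemma Dp_inv_two (σ : Mat n) (hρ : ρ.PosSemidef) :
    Dp 2⁻¹ ρ σ = if snorm 1 (mpow σ (1/2) * mpow ρ (1/2)) = 0 then ⊤
      else ((-2 * Real.log (snorm 1 (mpow σ (1/2) * mpow ρ (1/2))) : ℝ) : EReal) := by
  have hsandwich : sandwich (1/2) ρ σ =
      (mpow σ (1/2) * mpow ρ (1/2)) * (mpow σ (1/2) * mpow ρ (1/2))ᴴ := by
    rw [conjTranspose_mul, (isHermitian_mpow σ _).eq, (isHermitian_mpow ρ _).eq, mul_assoc,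
      ← mul_assoc (mpow ρ _), mpow_half_mul_self hρ, sandwich, mul_assoc]
    norm_num
  have htrace : traceR (mpow (sandwich (1/2) ρ σ) (1/2)) =
      snorm 1 (mpow σ (1/2) * mpow ρ (1/2)) := by
    rw [hsandwich, ← snorm_conjTranspose, snorm_one, conjTranspose_conjTranspose]
  have htoReal : (2⁻¹ : ℝ≥0∞).toReal = 1/2 := by simp
  have hne_one : (2⁻¹ : ℝ≥0∞) ≠ 1 := fun h => by norm_num [h] at htoReal
  rw [Dp, if_neg (by simp), if_neg hne_one, htoReal, if_neg (by norm_num), htrace]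
  norm_num

theorem statement1_general (hE : IsCondExp S E) (hρ : IsDensity ρ) (he : IsSupportProj ρ e) :
    (∀ σ ∈ S, IsDensity σ →
        snorm 1 (mpow σ (1/2) * mpow ρ (1/2)) ≤ (opNorm (E e)) ^ ((1 : ℝ)/2)) ∧
    ((- Real.log (opNorm (E e)) : ℝ) : EReal) ≤ DpSet 2⁻¹ ρ S := by
  have hbound {σ : Mat n} (hσS : σ ∈ S) (hσ : IsDensity σ) :=
    hE.snorm_one_mpow_half_mul_mpow_half_le hρ he hσS hσ
  refine ⟨fun σ hσS hσ => ?_, le_iInf₂ fun σ ⟨hσS, hσ⟩ => ?_⟩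
  · rw [← Real.sqrt_eq_rpow]
    exact hbound hσS hσ
  rw [Dp_inv_two σ hρ.1]
  split_ifs with hzero
  · exact le_top
  have hpos : 0 < snorm 1 (mpow σ (1/2) * mpow ρ (1/2)) := (snorm_nonneg 1 _).lt_of_ne' hzero
  have hlog := Real.log_le_log hpos (hbound hσS hσ)
  rw [Real.log_sqrt (show 0 ≤ opNorm (E e) from norm_nonneg _)] at hlog
  rw [EReal.coe_le_coe_iff]
  linarith

end Divergence

/-- if `e` is the support projection of a density `ρ`, then for
every density `σ ∈ N`, `‖σ^{1/2} ρ^{1/2}‖₁ ≤ ‖E(e)‖_∞^{1/2}`; consequently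
`D_{1/2}(ρ‖N) ≥ -log ‖E(e)‖_∞`. -/
theorem statement1 {m : ℕ} (N : StarSubalgebra ℂ (Mat (Fin m)))
    (E : Mat (Fin m) →ₗ[ℂ] Mat (Fin m)) (hE : IsCondExp (N : Set (Mat (Fin m))) E)
    (ρ e : Mat (Fin m)) (hρ : IsDensity ρ) (he : IsSupportProj ρ e) :
    (∀ σ ∈ (N : Set (Mat (Fin m))), IsDensity σ →
        snorm 1 (mpow σ (1/2) * mpow ρ (1/2)) ≤ (opNorm (E e)) ^ ((1 : ℝ)/2)) ∧
    ((- Real.log (opNorm (E e)) : ℝ) : EReal) ≤ DpSet 2⁻¹ ρ (N : Set (Mat (Fin m))) :=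
  statement1_general hE hρ he

end GJL
end
end

section
/- Let N ⊆ M_m be a unital *-subalgebra, let ρ ∈ M_m be a density and let σ ∈ N be a density whose support projection dominates that of ρ. Then D(ρ‖σ) = D(ρ‖E(ρ)) + D(E(ρ)‖σ). -/
open scoped ENNReal Classical ComplexOrder
open Matrix

noncomputable section

namespace GJL

variable {n : Type*} [Fintype n] [DecidableEq n]

/-!
The conditional expectation satisfies `Tr(E(x) y) = Tr(x y)` for `y ∈ N`, and `N` is closed under
the functional calculus. Hence `Tr(ρ log E(ρ)) = Tr(E(ρ) log E(ρ))` and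
`Tr(ρ log σ) = Tr(E(ρ) log σ)`, and the finite parts of the three relative entropies telescope.
The projection `q` onto `ker E(ρ)` also lies in `N`, so `Tr(ρ q) = 0` and therefore `ρ q = 0`:
`E(ρ)` dominates the support of `ρ`. Since `E` is right `N`-linear, `σ ∈ N` dominates the support
of `E(ρ)` exactly when it dominates that of `ρ`, so infinite values occur on both sides together.
-/

theorem suppLe.trans {ρ τ σ : Mat n} (hρτ : suppLe ρ τ) (hτσ : suppLe τ σ) : suppLe ρ σ :=
  fun v hv => hρτ v (hτσ v hv)

open scoped MatrixOrder in
theorem mul_eq_zero_of_trace_mul_eq_zero {ι 𝕜 : Type*} [Fintype ι] [RCLike 𝕜]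
    {A B : Matrix ι ι 𝕜} (hA : A.PosSemidef) (hB : B.PosSemidef) (h : (A * B).trace = 0) :
    A * B = 0 := by
  obtain ⟨a, rfl⟩ := CStarAlgebra.nonneg_iff_eq_star_mul_self.mp hA.nonneg
  obtain ⟨b, rfl⟩ := CStarAlgebra.nonneg_iff_eq_star_mul_self.mp hB.nonneg
  simp only [star_eq_conjTranspose] at h ⊢
  have hab : a * bᴴ = 0 := by
    rw [← trace_mul_conjTranspose_self_eq_zero_iff, conjTranspose_mul, conjTranspose_conjTranspose,
      ← Matrix.mul_assoc, trace_mul_comm, ← h]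
    simp only [Matrix.mul_assoc]
  rw [Matrix.mul_assoc, ← Matrix.mul_assoc a, hab, Matrix.zero_mul, Matrix.mul_zero]

theorem cfc_mem_starSubalgebra {𝕜 : Type*} [RCLike 𝕜] (N : StarSubalgebra 𝕜 (Matrix n n 𝕜))
    (f : ℝ → ℝ) {A : Matrix n n 𝕜} (hA : A ∈ N) : cfc f A ∈ N :=
  have : IsClosed (N : Set (Matrix n n 𝕜)) :=
    Submodule.closed_of_finiteDimensional (Subalgebra.toSubmodule N.toSubalgebra)
  cfc_mem f hA

/-- The orthogonal projection onto the kernel of a Hermitian matrix, written as a function of the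
matrix so that it stays in every unital *-subalgebra containing it. -/
def kerProj (A : Mat n) : Mat n := cfc (fun x : ℝ => if x = 0 then 1 else 0) A

open scoped MatrixOrder in
theorem posSemidef_kerProj (A : Mat n) : (kerProj A).PosSemidef :=
  (cfc_nonneg fun x _ => by split_ifs <;> simp).posSemidef

theorem kerProj_mem (N : StarSubalgebra ℂ (Mat n)) {A : Mat n} (hA : A ∈ N) : kerProj A ∈ N :=
  cfc_mem_starSubalgebra N _ hA

theorem mul_kerProj {A : Mat n} (hA : A.IsHermitian) : A * kerProj A = 0 := by
  have hcont (f : ℝ → ℝ) : ContinuousOn f (spectrum ℝ A) := A.finite_real_spectrum.continuousOn f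
  calc A * kerProj A = cfc (fun x : ℝ => x * if x = 0 then 1 else 0) A := by
        rw [cfc_mul _ _ A (hcont _) (hcont _), cfc_id' ℝ A hA.isSelfAdjoint, kerProj]
    _ = cfc (fun _ : ℝ => 0) A := cfc_congr fun x _ => by simp +contextual
    _ = 0 := cfc_const_zero ℝ A

theorem kerProj_add_cfc_inv_mul {A : Mat n} (hA : A.IsHermitian) :
    kerProj A + cfc (fun x : ℝ => x⁻¹) A * A = 1 := by
  have hcont (f : ℝ → ℝ) : ContinuousOn f (spectrum ℝ A) := A.finite_real_spectrum.continuousOn f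
  calc kerProj A + cfc (fun x : ℝ => x⁻¹) A * A
      = cfc (fun x : ℝ => (if x = 0 then 1 else 0) + x⁻¹ * x) A := by
        rw [cfc_add A _ _ (hcont _) (hcont _), cfc_mul _ _ A (hcont _) (hcont _),
          cfc_id' ℝ A hA.isSelfAdjoint, kerProj]
    _ = cfc (fun _ : ℝ => 1) A := cfc_congr fun x _ => by by_cases h : x = 0 <;> simp [h]
    _ = 1 := cfc_const_one ℝ A hA.isSelfAdjoint

theorem suppLe_iff_mul_kerProj_eq_zero {ρ σ : Mat n} (hσ : σ.IsHermitian) :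
    suppLe ρ σ ↔ ρ * kerProj σ = 0 := by
  constructor
  · intro h
    refine ext_of_mulVec_single fun i => ?_
    rw [← mulVec_mulVec, zero_mulVec]
    exact h _ (by rw [mulVec_mulVec, mul_kerProj hσ, zero_mulVec])
  · intro h v hv
    have hfix : kerProj σ *ᵥ v = v := by
      simpa [add_mulVec, ← mulVec_mulVec, hv] using
        congrArg (· *ᵥ v) (kerProj_add_cfc_inv_mul hσ)
    rw [← hfix, mulVec_mulVec, h, zero_mulVec]

namespace IsCondExp

variable {N : StarSubalgebra ℂ (Mat n)} {E : Mat n →ₗ[ℂ] Mat n}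

theorem trace_mul (hE : IsCondExp (N : Set (Mat n)) E) (x : Mat n) {y : Mat n} (hy : y ∈ N) :
    (E x * y).trace = (x * y).trace := by
  have h := congrArg star (hE.2.2 x yᴴ (star_mem hy))
  rwa [← conjTranspose_mul, ← conjTranspose_mul, trace_conjTranspose, trace_conjTranspose,
    star_star, star_star, trace_mul_comm, trace_mul_comm y] at h

theorem eq_of_trace_mul_eq (hE : IsCondExp (N : Set (Mat n)) E) {x a : Mat n} (ha : a ∈ N)
    (h : ∀ y ∈ N, (a * y).trace = (x * y).trace) : E x = a := by
  have hmem : (E x - a)ᴴ ∈ N := star_mem (sub_mem (hE.1 x) ha)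
  rw [← sub_eq_zero, ← trace_mul_conjTranspose_self_eq_zero_iff, Matrix.sub_mul, trace_sub,
    hE.trace_mul x hmem, h _ hmem, sub_self]

theorem map_conjTranspose (hE : IsCondExp (N : Set (Mat n)) E) (x : Mat n) : E xᴴ = (E x)ᴴ :=
  hE.eq_of_trace_mul_eq (star_mem (hE.1 x)) (hE.2.2 x)

theorem map_isHermitian (hE : IsCondExp (N : Set (Mat n)) E) {x : Mat n} (hx : x.IsHermitian) :
    (E x).IsHermitian := by
  rw [IsHermitian, ← hE.map_conjTranspose, hx.eq]

theorem map_mul_right (hE : IsCondExp (N : Set (Mat n)) E) (x : Mat n) {b : Mat n} (hb : b ∈ N) :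
    E (x * b) = E x * b :=
  hE.eq_of_trace_mul_eq (mul_mem (hE.1 x) hb) fun y hy => by
    rw [Matrix.mul_assoc, Matrix.mul_assoc, hE.trace_mul x (mul_mem hb hy)]

theorem suppLe_self_map (hE : IsCondExp (N : Set (Mat n)) E) {ρ : Mat n} (hρ : ρ.PosSemidef) :
    suppLe ρ (E ρ) := by
  have hH : (E ρ).IsHermitian := hE.map_isHermitian hρ.isHermitian
  rw [suppLe_iff_mul_kerProj_eq_zero hH]
  apply mul_eq_zero_of_trace_mul_eq_zero hρ (posSemidef_kerProj _)
  rw [← hE.trace_mul ρ (kerProj_mem N (hE.1 ρ)), mul_kerProj hH, trace_zero]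

theorem suppLe_map_iff (hE : IsCondExp (N : Set (Mat n)) E) {ρ σ : Mat n} (hρ : ρ.PosSemidef)
    (hσ : σ.IsHermitian) (hσN : σ ∈ N) : suppLe (E ρ) σ ↔ suppLe ρ σ := by
  refine ⟨(hE.suppLe_self_map hρ).trans, fun h => ?_⟩
  rw [suppLe_iff_mul_kerProj_eq_zero hσ] at h ⊢
  rw [← hE.map_mul_right ρ (kerProj_mem N hσN), h, map_zero]

theorem traceR_relEntropy_eq_add (hE : IsCondExp (N : Set (Mat n)) E) (ρ : Mat n) {σ : Mat n}
    (hσN : σ ∈ N) :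
    traceR (ρ * mlog ρ - ρ * mlog σ) =
      traceR (ρ * mlog ρ - ρ * mlog (E ρ)) + traceR (E ρ * mlog (E ρ) - E ρ * mlog σ) := by
  have trace_mul_mlog {τ : Mat n} (hτ : τ ∈ N) : (E ρ * mlog τ).trace = (ρ * mlog τ).trace :=
    hE.trace_mul ρ (cfc_mem_starSubalgebra N Real.log hτ)
  simp only [traceR, trace_sub, trace_mul_mlog (hE.1 ρ), trace_mul_mlog hσN, Complex.sub_re]
  ring

end IsCondExp

theorem Dp_one (ρ σ : Mat n) : Dp 1 ρ σ = DU ρ σ := by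
  simp [Dp]

theorem statement2_general {N : StarSubalgebra ℂ (Mat n)} {E : Mat n →ₗ[ℂ] Mat n}
    (hE : IsCondExp (N : Set (Mat n)) E) {ρ σ : Mat n} (hρ : ρ.PosSemidef) (hσ : σ.PosSemidef)
    (hσN : σ ∈ N) : Dp 1 ρ σ = Dp 1 ρ (E ρ) + Dp 1 (E ρ) σ := by
  have hρE : suppLe ρ (E ρ) := hE.suppLe_self_map hρ
  have hEσ : suppLe (E ρ) σ ↔ suppLe ρ σ := hE.suppLe_map_iff hρ hσ.isHermitian hσN
  simp only [Dp_one, DU, hEσ, if_pos hρE]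
  by_cases hρσ : suppLe ρ σ
  · simp only [if_pos hρσ]
    rw [← EReal.coe_add, hE.traceR_relEntropy_eq_add ρ hσN]
  · simp only [if_neg hρσ, EReal.coe_add_top]

/-- for a density `ρ` and a density `σ ∈ N` whose support
dominates that of `ρ`, `D(ρ‖σ) = D(ρ‖E(ρ)) + D(E(ρ)‖σ)`. -/
theorem statement2 {m : ℕ} (N : StarSubalgebra ℂ (Mat (Fin m)))
    (E : Mat (Fin m) →ₗ[ℂ] Mat (Fin m)) (hE : IsCondExp (N : Set (Mat (Fin m))) E)
    (ρ σ : Mat (Fin m)) (hρ : IsDensity ρ) (hσ : IsDensity σ)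
    (hσN : σ ∈ (N : Set (Mat (Fin m)))) (hsupp : suppLe ρ σ) :
    Dp 1 ρ σ = Dp 1 ρ (E ρ) + Dp 1 (E ρ) σ :=
  statement2_general hE hρ.1 hσ.1 hσN

end GJL
end
end
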